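/- arXiv:2203.03472 — 5 statements merged into one kernel-verified Lean document; each statement's English description precedes it below -/
import Mathlib

section
/- Let m ≥ 2 be an integer, R : ℝ^m → ℝ a polynomial function and r > 0. Then ∫_{B(0,r)} R(x) dV(x) = Σ_{k=0}^∞ (π^{m/2} / (2^{2k} · k! · Γ(m/2 + 1 + k))) · (Δ^k R)(0) · r^{2k+m}, where B(0,r) = {x ∈ ℝ^m : ‖x‖ < r} and dV is the Lebesgue measure on ℝ^m. -/
open MeasureTheory Real MvPolynomial
open scoped RealInnerProductSpace

/-- The Laplacian acting on (multivariate) polynomials. -/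
noncomputable def polyLap {m : ℕ} (P : MvPolynomial (Fin m) ℝ) : MvPolynomial (Fin m) ℝ :=
  ∑ j, pderiv j (pderiv j P)

/-- Evaluation of a polynomial at a point of Euclidean space. -/
noncomputable def polyEval {m : ℕ} (x : EuclideanSpace ℝ (Fin m)) (P : MvPolynomial (Fin m) ℝ) : ℝ :=
  eval (fun i => x i) P

/-!
If `f` is homogeneous of degree `n`, its integral over `B(0, t)` is `t ^ (n + m)` times its
integral over `B(0, 1)`. Writing `e ^ (-‖x‖²)` as the integral of `2 t e ^ (-t²)` over `t > ‖x‖`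
and exchanging the integrals, the Gaussian integral of `f` is `Γ((n + m) / 2 + 1)` times its
integral over `B(0, 1)`. It therefore suffices to compute the Gaussian integral `G(P)` of a
homogeneous polynomial `P`. Euler's identity `n P = ∑ xⱼ ∂ⱼP` and Gaussian integration by parts
`2 G(xⱼ Q) = G(∂ⱼQ)` give `G(ΔP) = 2 n G(P)`, so that `G(P) = π ^ (m / 2) Δᵏ P / (4ᵏ k!)` when
`n = 2k`; the odd degrees do not contribute. Finally `(Δᵏ R)(0)` only sees the component of `R` of
degree `2k`, and the `k`-th term of Pizzetti's series is the integral of that component.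
-/

open Set Metric Module

lemma integrableOn_ball_of_locallyIntegrable {X F : Type*} [PseudoMetricSpace X] [ProperSpace X]
    [MeasurableSpace X] [NormedAddCommGroup F] {μ : Measure X} {f : X → F}
    (hf : LocallyIntegrable f μ) (x : X) (r : ℝ) : IntegrableOn f (ball x r) μ :=
  (hf.integrableOn_isCompact (isCompact_closedBall x r)).mono_set ball_subset_closedBall

lemma setIntegral_Ioi_indicator_ball {E F : Type*} [SeminormedAddCommGroup E]
    [NormedAddCommGroup F] [NormedSpace ℝ F] [CompleteSpace F] (f : E → F) (w : ℝ → ℝ) (x : E) :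
    ∫ t in Ioi (0 : ℝ), (ball 0 t).indicator (fun x => w t • f x) x
      = (∫ t in Ioi ‖x‖, w t) • f x := by
  have hind (t : ℝ) : (ball 0 t).indicator (fun x => w t • f x) x
      = (Ioi ‖x‖).indicator (fun t => w t • f x) t := by
    classical simp [Set.indicator_apply]
  simp_rw [hind]
  rw [setIntegral_indicator measurableSet_Ioi, Ioi_inter_Ioi, sup_eq_right.2 (norm_nonneg x),
    integral_smul_const]

section PosHomogeneous

variable {E F : Type*} [NormedAddCommGroup E] [NormedSpace ℝ E]
  [NormedAddCommGroup F] [NormedSpace ℝ F] {f : E → F} {n : ℕ}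

/-- `f` is positively homogeneous of degree `n`, the property that makes integrals over balls
scale as powers of the radius; the scaling law is required for positive scalars only. -/
def IsPosHomogeneous (f : E → F) (n : ℕ) : Prop :=
  ∀ ⦃s : ℝ⦄, 0 < s → ∀ x, f (s • x) = s ^ n • f x

namespace IsPosHomogeneous

lemma norm (hf : IsPosHomogeneous f n) : IsPosHomogeneous (fun x => ‖f x‖) n := fun s hs x => by
  simp only [hf hs, norm_smul, norm_pow, norm_of_nonneg hs.le, smul_eq_mul]

variable [MeasurableSpace E] [BorelSpace E] [FiniteDimensional ℝ E] {μ : Measure E}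
  [μ.IsAddHaarMeasure] {w : ℝ → ℝ}

lemma setIntegral_ball (hf : IsPosHomogeneous f n) {r : ℝ} (hr : 0 < r) :
    ∫ x in ball 0 r, f x ∂μ = r ^ (n + finrank ℝ E) • ∫ x in ball 0 1, f x ∂μ := by
  have hscale := Measure.setIntegral_comp_smul_of_pos μ f (ball 0 1) hr
  simp only [hf hr, integral_smul, smul_unitBall_of_pos hr] at hscale
  rw [pow_add, mul_comm, mul_smul, hscale, smul_inv_smul₀ (pow_pos hr _).ne']

lemma integrable_prod_indicator_ball (hf : IsPosHomogeneous f n) (hfi : LocallyIntegrable f μ)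
    (hwm : AEStronglyMeasurable w (volume.restrict (Ioi 0)))
    (hwi : IntegrableOn (fun t => t ^ (n + finrank ℝ E) * w t) (Ioi 0)) :
    Integrable (fun p : E × ℝ => (ball 0 p.2).indicator (fun x => w p.2 • f x) p.1)
      (μ.prod (volume.restrict (Ioi 0))) := by
  have hmeas : AEStronglyMeasurable (fun p : E × ℝ => w p.2 • f p.1)
      (μ.prod (volume.restrict (Ioi 0))) :=
    hwm.comp_snd.smul hfi.aestronglyMeasurable.comp_fst
  have hset : MeasurableSet {p : E × ℝ | p.1 ∈ ball 0 p.2} := by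
    simpa only [mem_ball_zero_iff] using measurableSet_lt measurable_fst.norm measurable_snd
  refine (integrable_prod_iff' (hmeas.indicator hset)).2 ⟨.of_forall fun t => ?_, ?_⟩
  · exact ((integrable_indicator_iff measurableSet_ball).2
      ((integrableOn_ball_of_locallyIntegrable hfi 0 t).smul (w t)))
  · refine (hwi.norm.mul_const (∫ x in ball 0 1, ‖f x‖ ∂μ)).congr ?_
    filter_upwards [self_mem_ae_restrict measurableSet_Ioi] with t (ht : 0 < t)
    calc ‖t ^ (n + finrank ℝ E) * w t‖ * ∫ x in ball 0 1, ‖f x‖ ∂μ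
        = ‖w t‖ * ∫ x in ball 0 t, ‖f x‖ ∂μ := by
          rw [hf.norm.setIntegral_ball ht, norm_mul, norm_pow, norm_of_nonneg ht.le, smul_eq_mul]
          ring
      _ = ∫ x, ‖(ball 0 t).indicator (fun x => w t • f x) x‖ ∂μ := by
          simp only [norm_indicator_eq_indicator_norm, norm_smul,
            integral_indicator measurableSet_ball, integral_const_mul]

lemma integrable_integral_Ioi_smul [CompleteSpace F] (hf : IsPosHomogeneous f n)
    (hfi : LocallyIntegrable f μ) (hwm : AEStronglyMeasurable w (volume.restrict (Ioi 0)))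
    (hwi : IntegrableOn (fun t => t ^ (n + finrank ℝ E) * w t) (Ioi 0)) :
    Integrable (fun x => (∫ t in Ioi ‖x‖, w t) • f x) μ := by
  simpa only [setIntegral_Ioi_indicator_ball] using
    (hf.integrable_prod_indicator_ball hfi hwm hwi).integral_prod_left

lemma integral_integral_Ioi_smul [CompleteSpace F] (hf : IsPosHomogeneous f n)
    (hfi : LocallyIntegrable f μ) (hwm : AEStronglyMeasurable w (volume.restrict (Ioi 0)))
    (hwi : IntegrableOn (fun t => t ^ (n + finrank ℝ E) * w t) (Ioi 0)) :
    ∫ x, (∫ t in Ioi ‖x‖, w t) • f x ∂μ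
      = (∫ t in Ioi (0 : ℝ), t ^ (n + finrank ℝ E) * w t) • ∫ x in ball 0 1, f x ∂μ := by
  calc ∫ x, (∫ t in Ioi ‖x‖, w t) • f x ∂μ
      = ∫ x, (∫ t in Ioi (0 : ℝ), (ball 0 t).indicator (fun x => w t • f x) x) ∂μ := by
        simp only [setIntegral_Ioi_indicator_ball]
    _ = ∫ t in Ioi (0 : ℝ), ∫ x, (ball 0 t).indicator (fun x => w t • f x) x ∂μ :=
        integral_integral_swap (hf.integrable_prod_indicator_ball hfi hwm hwi)
    _ = ∫ t in Ioi (0 : ℝ), (t ^ (n + finrank ℝ E) * w t) • ∫ x in ball 0 1, f x ∂μ := by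
        refine setIntegral_congr_fun measurableSet_Ioi fun t (ht : 0 < t) => ?_
        simp only [integral_indicator measurableSet_ball, integral_smul,
          hf.setIntegral_ball ht, smul_smul, mul_comm]
    _ = _ := integral_smul_const _ _

end IsPosHomogeneous

end PosHomogeneous

section Gaussian

lemma integral_Ioi_two_mul_mul_exp_neg_sq (a : ℝ) :
    ∫ t in Ioi a, 2 * t * rexp (-t ^ 2) = rexp (-a ^ 2) := by
  have hderiv (t : ℝ) : HasDerivAt (fun t => -rexp (-t ^ 2)) (2 * t * rexp (-t ^ 2)) t := by
    convert! ((hasDerivAt_pow 2 t).neg.exp).neg using 1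
    simp [mul_comm]
  have hint : Integrable fun t : ℝ => 2 * t * rexp (-t ^ 2) := by
    simpa [mul_assoc] using (integrable_mul_exp_neg_mul_sq one_pos).const_mul 2
  have hlim : Filter.Tendsto (fun t : ℝ => -rexp (-t ^ 2)) Filter.atTop (nhds 0) := by
    simpa using (tendsto_exp_neg_atTop_nhds_zero.comp
      (Filter.tendsto_pow_atTop (α := ℝ) two_ne_zero)).neg
  rw [integral_Ioi_of_hasDerivAt_of_tendsto' (fun t _ => hderiv t) hint.integrableOn hlim,
    zero_sub, neg_neg]

lemma integrableOn_Ioi_pow_mul_exp_neg_sq (k : ℕ) :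
    IntegrableOn (fun t : ℝ => t ^ k * (2 * t * rexp (-t ^ 2))) (Ioi 0) := by
  have hint := integrableOn_rpow_mul_exp_neg_mul_sq (s := (k + 1 : ℕ)) one_pos
    (neg_one_lt_zero.trans_le (Nat.cast_nonneg _))
  refine IntegrableOn.congr_fun (hint.const_mul 2) (fun t _ => ?_) measurableSet_Ioi
  simp only [rpow_natCast]
  ring_nf

lemma integral_Ioi_pow_mul_exp_neg_sq (k : ℕ) :
    ∫ t in Ioi (0 : ℝ), t ^ k * (2 * t * rexp (-t ^ 2)) = Gamma (k / 2 + 1) := by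
  have hGamma := integral_rpow_mul_exp_neg_rpow (q := (k + 1 : ℕ)) two_pos
    (neg_one_lt_zero.trans_le (Nat.cast_nonneg _))
  simp only [rpow_natCast, rpow_two] at hGamma
  calc ∫ t in Ioi (0 : ℝ), t ^ k * (2 * t * rexp (-t ^ 2))
      = 2 * ∫ t in Ioi (0 : ℝ), t ^ (k + 1) * rexp (-t ^ 2) := by
        rw [← integral_const_mul]
        congr with t
        ring
    _ = Gamma (k / 2 + 1) := by
        rw [hGamma, ← mul_assoc, mul_one_div_cancel two_ne_zero, one_mul]
        congr 1
        push_cast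
        ring

variable {E F : Type*} [NormedAddCommGroup E] [NormedSpace ℝ E] [MeasurableSpace E] [BorelSpace E]
  [FiniteDimensional ℝ E] {μ : Measure E} [μ.IsAddHaarMeasure] [NormedAddCommGroup F]
  [NormedSpace ℝ F] [CompleteSpace F] {f : E → F} {n : ℕ}

lemma IsPosHomogeneous.integrable_exp_neg_norm_sq_smul (hf : IsPosHomogeneous f n)
    (hfi : LocallyIntegrable f μ) : Integrable (fun x => rexp (-‖x‖ ^ 2) • f x) μ := by
  simpa only [integral_Ioi_two_mul_mul_exp_neg_sq] using hf.integrable_integral_Ioi_smul hfi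
    (w := fun t => 2 * t * rexp (-t ^ 2)) (by fun_prop) (integrableOn_Ioi_pow_mul_exp_neg_sq _)

lemma IsPosHomogeneous.integral_exp_neg_norm_sq_smul (hf : IsPosHomogeneous f n)
    (hfi : LocallyIntegrable f μ) :
    ∫ x, rexp (-‖x‖ ^ 2) • f x ∂μ
      = Gamma ((n + finrank ℝ E : ℕ) / 2 + 1) • ∫ x in ball 0 1, f x ∂μ := by
  simpa only [integral_Ioi_two_mul_mul_exp_neg_sq, integral_Ioi_pow_mul_exp_neg_sq] using
    hf.integral_integral_Ioi_smul hfi (w := fun t => 2 * t * rexp (-t ^ 2)) (by fun_prop)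
      (integrableOn_Ioi_pow_mul_exp_neg_sq _)

lemma hasLineDerivAt_exp_neg_norm_sq {V : Type*} [NormedAddCommGroup V] [InnerProductSpace ℝ V]
    (x v : V) :
    HasLineDerivAt ℝ (fun x => rexp (-‖x‖ ^ 2)) (-(2 * ⟪x, v⟫) * rexp (-‖x‖ ^ 2)) x v := by
  convert! (hasStrictFDerivAt_norm_sq x).hasFDerivAt.neg.exp.hasLineDerivAt v using 1
  simp only [neg_mul, Pi.neg_apply, smul_neg, neg_apply, smul_apply, coe_innerSL_apply,
    nsmul_eq_mul, Nat.cast_ofNat, smul_eq_mul, neg_inj]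
  ring

end Gaussian

section Polynomial

lemma homogeneousComponent_pderiv {σ A : Type*} [CommSemiring A] (i : σ) (n : ℕ)
    (P : MvPolynomial σ A) :
    homogeneousComponent n (pderiv i P) = pderiv i (homogeneousComponent (n + 1) P) := by
  ext d
  simp only [coeff_homogeneousComponent, coeff_pderiv, map_add, Finsupp.degree_single,
    add_left_inj, ite_mul, zero_mul]

lemma eval_smul_of_isHomogeneous {σ A : Type*} [CommSemiring A] {P : MvPolynomial σ A} {n : ℕ}
    (hP : P.IsHomogeneous n) (s : A) (x : σ → A) : eval (s • x) P = s ^ n * eval x P := by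
  simp only [eval_eq, Finset.mul_sum]
  refine Finset.sum_congr rfl fun d hd => ?_
  simp only [Pi.smul_apply, smul_eq_mul, mul_pow, Finset.prod_mul_distrib,
    Finset.prod_pow_eq_pow_sum, ← hP.degree_eq_sum_deg_support hd]
  ring

lemma hasDerivAt_eval_add_smul_single {σ 𝕜 : Type*} [NontriviallyNormedField 𝕜] [DecidableEq σ]
    (j : σ) (P : MvPolynomial σ 𝕜) (x : σ → 𝕜) :
    HasDerivAt (fun t : 𝕜 => eval (x + t • Pi.single j 1) P) (eval x (pderiv j P)) 0 := by
  induction P using MvPolynomial.induction_on with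
  | C a => simpa only [eval_C, pderiv_C, map_zero] using hasDerivAt_const 0 a
  | add P Q hP hQ => simpa only [map_add] using hP.fun_add hQ
  | mul_X P i hP =>
    have hX : HasDerivAt (fun t : 𝕜 => eval (x + t • Pi.single j 1) (X i))
        (eval x (pderiv j (X i))) 0 := by
      have hi := ((hasDerivAt_id (0 : 𝕜)).mul_const ((Pi.single j 1 : σ → 𝕜) i)).const_add (x i)
      rcases eq_or_ne i j with rfl | hij
      · simpa using hi
      · simpa [hij, pderiv_X_of_ne] using hi
    simpa [add_comm, mul_comm] using hP.fun_mul hX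

variable {m n : ℕ}

lemma homogeneousComponent_polyLap (n : ℕ) (P : MvPolynomial (Fin m) ℝ) :
    homogeneousComponent n (polyLap P) = polyLap (homogeneousComponent (n + 2) P) := by
  simp only [polyLap, map_sum, homogeneousComponent_pderiv]

lemma homogeneousComponent_polyLap_iterate (n k : ℕ) (P : MvPolynomial (Fin m) ℝ) :
    homogeneousComponent n (polyLap^[k] P) = polyLap^[k] (homogeneousComponent (n + 2 * k) P) := by
  induction k generalizing P with
  | zero => rfl
  | succ k ih =>
    rw [Function.iterate_succ_apply, Function.iterate_succ_apply, ih, homogeneousComponent_polyLap,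
      mul_add_one, add_assoc]

lemma polyLap_isHomogeneous {P : MvPolynomial (Fin m) ℝ} (hP : P.IsHomogeneous (n + 2)) :
    (polyLap P).IsHomogeneous n :=
  IsHomogeneous.sum _ _ _ fun _ _ => hP.pderiv.pderiv

lemma polyEval_zero (P : MvPolynomial (Fin m) ℝ) : polyEval 0 P = coeff 0 P := by
  rw [← constantCoeff_eq, ← eval_zero]
  rfl

lemma polyEval_zero_polyLap_iterate (k : ℕ) (P : MvPolynomial (Fin m) ℝ) :
    polyEval 0 (polyLap^[k] P) = polyEval 0 (polyLap^[k] (homogeneousComponent (2 * k) P)) := by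
  rw [← zero_add (2 * k), ← homogeneousComponent_polyLap_iterate, homogeneousComponent_zero,
    polyEval_zero, polyEval_zero, coeff_zero_C]

lemma polyEval_smul_of_isHomogeneous {P : MvPolynomial (Fin m) ℝ} (hP : P.IsHomogeneous n) (s : ℝ)
    (x : EuclideanSpace ℝ (Fin m)) : polyEval (s • x) P = s ^ n * polyEval x P :=
  eval_smul_of_isHomogeneous hP s x

lemma isPosHomogeneous_polyEval {P : MvPolynomial (Fin m) ℝ} (hP : P.IsHomogeneous n) :
    IsPosHomogeneous (fun x => polyEval x P) n :=
  fun s _ => polyEval_smul_of_isHomogeneous hP s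

lemma continuous_polyEval (P : MvPolynomial (Fin m) ℝ) :
    Continuous fun x : EuclideanSpace ℝ (Fin m) => polyEval x P :=
  (MvPolynomial.continuous_eval P).comp (PiLp.continuous_ofLp 2 _)

lemma locallyIntegrable_polyEval (P : MvPolynomial (Fin m) ℝ) :
    LocallyIntegrable fun x : EuclideanSpace ℝ (Fin m) => polyEval x P :=
  (continuous_polyEval P).locallyIntegrable

lemma hasLineDerivAt_polyEval (j : Fin m) (P : MvPolynomial (Fin m) ℝ)
    (x : EuclideanSpace ℝ (Fin m)) :
    HasLineDerivAt ℝ (fun x => polyEval x P) (polyEval x (pderiv j P)) x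
      (EuclideanSpace.single j 1) :=
  hasDerivAt_eval_add_smul_single j P x

end Polynomial

section GaussianIntegral

variable {m n : ℕ}

lemma integrable_exp_neg_norm_sq_mul_polyEval (P : MvPolynomial (Fin m) ℝ) :
    Integrable fun x => rexp (-‖x‖ ^ 2) * polyEval x P := by
  have hsum (x : EuclideanSpace ℝ (Fin m)) : rexp (-‖x‖ ^ 2) * polyEval x P
      = ∑ i ∈ Finset.range (P.totalDegree + 1),
          rexp (-‖x‖ ^ 2) * polyEval x (homogeneousComponent i P) := by
    simp only [polyEval, ← Finset.mul_sum, ← map_sum, sum_homogeneousComponent]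
  simp only [hsum]
  exact integrable_finsetSum _ fun i _ =>
    (isPosHomogeneous_polyEval (homogeneousComponent_isHomogeneous i P)
      ).integrable_exp_neg_norm_sq_smul (locallyIntegrable_polyEval _)

/-- The Gaussian integral `∫ e ^ (-‖x‖²) P(x) dx`, as a linear functional on polynomials. -/
noncomputable def gaussianIntegral : MvPolynomial (Fin m) ℝ →ₗ[ℝ] ℝ where
  toFun P := ∫ x, rexp (-‖x‖ ^ 2) * polyEval x P
  map_add' P Q := by
    rw [← integral_add (integrable_exp_neg_norm_sq_mul_polyEval P)
      (integrable_exp_neg_norm_sq_mul_polyEval Q)]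
    simp only [polyEval, map_add, mul_add]
  map_smul' c P := by
    simp only [polyEval, smul_eval, mul_left_comm _ c, integral_const_mul, RingHom.id_apply,
      smul_eq_mul]

lemma gaussianIntegral_apply (P : MvPolynomial (Fin m) ℝ) :
    gaussianIntegral P = ∫ x, rexp (-‖x‖ ^ 2) * polyEval x P :=
  rfl

lemma gaussianIntegral_C (c : ℝ) :
    gaussianIntegral (C c : MvPolynomial (Fin m) ℝ) = π ^ ((m : ℝ) / 2) * c := by
  have hgauss := GaussianFourier.integral_rexp_neg_mul_sq_norm
    (V := EuclideanSpace ℝ (Fin m)) one_pos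
  rw [finrank_euclideanSpace_fin, div_one] at hgauss
  simp only [gaussianIntegral_apply, polyEval, eval_C, integral_mul_const, ← hgauss, neg_mul,
    one_mul]

lemma gaussianIntegral_X_mul (j : Fin m) (P : MvPolynomial (Fin m) ℝ) :
    2 * gaussianIntegral (X j * P) = gaussianIntegral (pderiv j P) := by
  have hXP (x : EuclideanSpace ℝ (Fin m)) :
      -(2 * ⟪x, EuclideanSpace.single j 1⟫) * rexp (-‖x‖ ^ 2) * polyEval x P
        = -2 * (rexp (-‖x‖ ^ 2) * polyEval x (X j * P)) := by
    simp only [EuclideanSpace.inner_single_right, ringHom_apply, one_mul, neg_mul, polyEval,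
      map_mul, eval_X, neg_inj]
    ring
  have hparts := integral_bilinear_hasLineDerivAt_right_eq_neg_left_of_integrable
    (μ := volume) (B := ContinuousLinearMap.mul ℝ ℝ) (v := EuclideanSpace.single j (1 : ℝ))
    (f := fun x => rexp (-‖x‖ ^ 2)) (g := fun x => polyEval x P)
    (by simpa only [ContinuousLinearMap.mul_apply', hXP] using
      (integrable_exp_neg_norm_sq_mul_polyEval (X j * P)).const_mul (-2))
    (integrable_exp_neg_norm_sq_mul_polyEval (pderiv j P))
    (integrable_exp_neg_norm_sq_mul_polyEval P)
    (fun x _ => hasLineDerivAt_exp_neg_norm_sq x _) (fun x _ => hasLineDerivAt_polyEval j P x)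
  simp only [ContinuousLinearMap.mul_apply', hXP, integral_const_mul] at hparts
  simp only [gaussianIntegral_apply, hparts]
  ring

lemma gaussianIntegral_polyLap {P : MvPolynomial (Fin m) ℝ} (hP : P.IsHomogeneous n) :
    gaussianIntegral (polyLap P) = 2 * n * gaussianIntegral P := by
  calc gaussianIntegral (polyLap P)
      = 2 * gaussianIntegral (∑ j, X j * pderiv j P) := by
        simp only [polyLap, map_sum, Finset.mul_sum, gaussianIntegral_X_mul]
    _ = 2 * n * gaussianIntegral P := by
        rw [hP.sum_X_mul_pderiv, map_nsmul, nsmul_eq_mul, mul_assoc]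

lemma gaussianIntegral_of_isHomogeneous_two_mul (k : ℕ) {P : MvPolynomial (Fin m) ℝ}
    (hP : P.IsHomogeneous (2 * k)) :
    gaussianIntegral P
      = π ^ ((m : ℝ) / 2) / (2 ^ (2 * k) * k.factorial) * polyEval 0 (polyLap^[k] P) := by
  induction k generalizing P with
  | zero =>
    rw [mul_zero, ← totalDegree_zero_iff_isHomogeneous, totalDegree_eq_zero_iff_eq_C] at hP
    rw [hP, gaussianIntegral_C]
    simp [polyEval]
  | succ k ih =>
    have hlap := gaussianIntegral_polyLap hP
    rw [ih (polyLap_isHomogeneous hP)] at hlap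
    rw [Function.iterate_succ_apply, Nat.factorial_succ]
    push_cast at hlap ⊢
    field_simp at hlap ⊢
    linear_combination -hlap

end GaussianIntegral

section Ball

variable {m n : ℕ}

lemma setIntegral_ball_polyEval_of_isHomogeneous {P : MvPolynomial (Fin m) ℝ}
    (hP : P.IsHomogeneous n) {r : ℝ} (hr : 0 < r) :
    ∫ x in ball 0 r, polyEval x P
      = r ^ (n + m) * (gaussianIntegral P / Gamma ((n + m : ℕ) / 2 + 1)) := by
  have hhom := isPosHomogeneous_polyEval hP
  have hgauss := hhom.integral_exp_neg_norm_sq_smul (locallyIntegrable_polyEval P)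
  have hball := hhom.setIntegral_ball (μ := volume) hr
  simp only [finrank_euclideanSpace_fin, smul_eq_mul] at hgauss hball
  rw [hball, gaussianIntegral_apply, hgauss,
    mul_div_cancel_left₀ _ (Gamma_pos_of_pos (by positivity)).ne']

lemma setIntegral_ball_polyEval_of_isHomogeneous_two_mul (k : ℕ) {P : MvPolynomial (Fin m) ℝ}
    (hP : P.IsHomogeneous (2 * k)) {r : ℝ} (hr : 0 < r) :
    ∫ x in ball 0 r, polyEval x P
      = π ^ ((m : ℝ) / 2) / (2 ^ (2 * k) * k.factorial * Gamma ((m : ℝ) / 2 + 1 + k))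
          * polyEval 0 (polyLap^[k] P) * r ^ (2 * k + m) := by
  have hGamma : ((2 * k + m : ℕ) : ℝ) / 2 + 1 = m / 2 + 1 + k := by
    push_cast
    ring
  rw [setIntegral_ball_polyEval_of_isHomogeneous hP hr,
    gaussianIntegral_of_isHomogeneous_two_mul k hP, hGamma]
  ring

lemma setIntegral_ball_polyEval_of_isHomogeneous_of_odd {P : MvPolynomial (Fin m) ℝ}
    (hP : P.IsHomogeneous n) (hn : Odd n) (r : ℝ) :
    ∫ x in ball 0 r, polyEval x P = 0 := by
  have hneg (x : EuclideanSpace ℝ (Fin m)) : polyEval (-x) P = -polyEval x P := by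
    rw [← neg_one_smul ℝ x, polyEval_smul_of_isHomogeneous hP, hn.neg_one_pow, neg_one_mul]
  have hreflect := (Measure.measurePreserving_neg
    (volume : Measure (EuclideanSpace ℝ (Fin m)))).setIntegral_preimage_emb
    (MeasurableEquiv.neg _).measurableEmbedding (fun x => polyEval x P) (ball 0 r)
  simp only [hneg, integral_neg, neg_preimage, neg_ball, neg_zero] at hreflect
  linarith

lemma hasSum_setIntegral_ball_homogeneousComponent (P : MvPolynomial (Fin m) ℝ) (r : ℝ) :
    HasSum (fun n => ∫ x in ball 0 r, polyEval x (homogeneousComponent n P))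
      (∫ x in ball 0 r, polyEval x P) := by
  have hsum : ∫ x in ball 0 r, polyEval x P
      = ∑ n ∈ Finset.range (P.totalDegree + 1),
          ∫ x in ball 0 r, polyEval x (homogeneousComponent n P) := by
    rw [← integral_finsetSum _ fun n _ =>
      integrableOn_ball_of_locallyIntegrable (locallyIntegrable_polyEval _) 0 r]
    simp only [polyEval, ← map_sum, sum_homogeneousComponent]
  rw [hsum]
  refine hasSum_sum_of_ne_finset_zero fun n hn => ?_
  rw [homogeneousComponent_eq_zero n P (by simpa using hn)]
  simp only [polyEval, map_zero, integral_zero]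

end Ball

theorem pizzetti_ball_general (m : ℕ) (R : MvPolynomial (Fin m) ℝ) (r : ℝ) (hr : 0 < r) :
    HasSum (fun k : ℕ => (π ^ ((m : ℝ) / 2) /
          (2 ^ (2 * k) * (Nat.factorial k) * Gamma ((m : ℝ) / 2 + 1 + k)))
          * polyEval 0 (polyLap^[k] R) * r ^ (2 * k + m))
      (∫ x in ball (0 : EuclideanSpace ℝ (Fin m)) r, polyEval x R) := by
  have hterm (k : ℕ) := setIntegral_ball_polyEval_of_isHomogeneous_two_mul k
    (homogeneousComponent_isHomogeneous (2 * k) R) hr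
  simp only [← polyEval_zero_polyLap_iterate] at hterm
  have hodd : ∀ n ∉ range (2 * · : ℕ → ℕ),
      ∫ x in ball 0 r, polyEval x (homogeneousComponent n R) = 0 := fun n hn =>
    setIntegral_ball_polyEval_of_isHomogeneous_of_odd (homogeneousComponent_isHomogeneous n R)
      (by simpa [range_two_mul] using hn) r
  simpa only [Function.comp_def, hterm] using
    ((mul_right_injective₀ two_ne_zero).hasSum_iff hodd).2
      (hasSum_setIntegral_ball_homogeneousComponent R r)

/-- Pizzetti's formula on the ball `B(0,r)` of `ℝ^m`. -/
theorem pizzetti_ball (m : ℕ) (hm : 2 ≤ m) (R : MvPolynomial (Fin m) ℝ) (r : ℝ) (hr : 0 < r) :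
    ∫ x in Metric.ball (0 : EuclideanSpace ℝ (Fin m)) r, polyEval x R
      = ∑' k : ℕ, (π ^ ((m : ℝ) / 2) /
          (2 ^ (2 * k) * (Nat.factorial k) * Gamma ((m : ℝ) / 2 + 1 + k)))
          * polyEval 0 (polyLap^[k] R) * r ^ (2 * k + m) :=
  (pizzetti_ball_general m R r hr).tsum_eq.symm
end

section
/- Let m ≥ 2 and s ≥ 0 be integers, and let R_{2s} : ℝ^m → ℝ be a polynomial function that is homogeneous of degree 2s. Then for every unit vector ω ∈ S^{m-1}, (Δ^s R_{2s})(0) = (2^{2s} · s! / √π) · Σ_{k=0}^{s} (Γ(s − k + 1/2) / (2^{2k} · k!)) · ((Δ − ⟨ω,∂_x⟩²)^k R_{2s})(ω). (Note that Δ^s R_{2s} is a constant polynomial.) -/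
open MeasureTheory Real MvPolynomial
open scoped RealInnerProductSpace

/-- The directional derivative `⟨ω, ∂_x⟩` acting on (multivariate) polynomials. -/
noncomputable def polyDir {m : ℕ} (ω : EuclideanSpace ℝ (Fin m))
    (P : MvPolynomial (Fin m) ℝ) : MvPolynomial (Fin m) ℝ :=
  ∑ j, ω j • pderiv j P

/-!
Write `D = ⟨v, ∂⟩` and `A = Δ - D²`. Constant-coefficient operators commute, so the binomial theorem
gives `Δ ^ s = ∑ k, s.choose k • D ^ (2 * (s - k)) * A ^ k`. If `P` is homogeneous of degree `2 * s`,
then `A ^ k P` is homogeneous of degree `2 * (s - k)`, and on such polynomials Euler's identity at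
`v`, applied repeatedly, turns `D ^ (2 * (s - k))` into `(2 * (s - k))!` times evaluation at `v`.
The half-integer values of `Γ` rewrite the resulting coefficients.
-/

variable {σ R : Type*}

theorem eval_smul_of_isHomogeneous_s9 [CommSemiring R] {n : ℕ} {p : MvPolynomial σ R}
    (hp : p.IsHomogeneous n) (t : R) (x : σ → R) :
    eval (t • x) p = t ^ n * eval x p := by
  rw [eval_eq, eval_eq, Finset.mul_sum]
  refine Finset.sum_congr rfl fun d hd => ?_
  simp only [Pi.smul_apply, smul_eq_mul, mul_pow, Finset.prod_mul_distrib,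
    Finset.prod_pow_eq_pow_sum]
  rw [← hp.degree_eq_sum_deg_support hd]
  ring

theorem isHomogeneous_of_eval_smul [CommRing R] [IsDomain R] [Infinite R] {n : ℕ}
    {p : MvPolynomial σ R} (h : ∀ (t : R) (x : σ → R), eval (t • x) p = t ^ n * eval x p) :
    p.IsHomogeneous n := by
  suffices homogeneousComponent n p = p from this ▸ homogeneousComponent_isHomogeneous n p
  refine MvPolynomial.funext fun x => ?_
  -- For fixed `x`, both sides of `h t x` are polynomials in `t`: compare their coefficients at `n`.
  have expansion : ∑ i ∈ Finset.range (p.totalDegree + 1),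
      Polynomial.monomial i (eval x (homogeneousComponent i p)) =
        Polynomial.monomial n (eval x p) := by
    refine Polynomial.funext fun t => ?_
    have scaled := h t x
    rw [← sum_homogeneousComponent p, map_sum] at scaled
    simp only [eval_smul_of_isHomogeneous_s9 (homogeneousComponent_isHomogeneous _ p)] at scaled
    simpa [Polynomial.eval_finsetSum, mul_comm, sum_homogeneousComponent] using scaled
  have coeff_n : (if n ∈ Finset.range (p.totalDegree + 1) then
      eval x (homogeneousComponent n p) else 0) = eval x p := by
    simpa [Polynomial.coeff_monomial] using congrArg (Polynomial.coeff · n) expansion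
  rw [← coeff_n]
  split_ifs with hn
  · rfl
  · rw [homogeneousComponent_eq_zero n p (by simpa using hn), map_zero]

/-- The linear operators that send homogeneous polynomials of degree `n` to homogeneous polynomials
of degree `n - r`, such as homogeneous constant-coefficient differential operators of order `r`.
The subtraction is truncated, as in `MvPolynomial.IsHomogeneous.pderiv`. -/
def degreeLowering (σ R : Type*) [CommSemiring R] (r : ℕ) :
    Submodule R (Module.End R (MvPolynomial σ R)) where
  carrier := {L | ∀ ⦃n : ℕ⦄ ⦃p : MvPolynomial σ R⦄, p.IsHomogeneous n → (L p).IsHomogeneous (n - r)}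
  zero_mem' n _ _ := isHomogeneous_zero σ R (n - r)
  add_mem' hL hM _ _ hp := (hL hp).add (hM hp)
  smul_mem' c _ hL n _ hp := (homogeneousSubmodule σ R (n - r)).smul_mem c (hL hp)

instance degreeLowering.gradedMonoid [CommSemiring R] :
    SetLike.GradedMonoid (degreeLowering σ R) where
  one_mem _ _ hp := hp
  mul_mem i j _ _ hL hM n _ hp := by
    rw [add_comm i j, ← Nat.sub_sub]
    exact hL (hM hp)

section Operators

variable [CommSemiring R]

theorem pderiv_mem_degreeLowering (i : σ) :
    (pderiv i : Derivation R (MvPolynomial σ R) (MvPolynomial σ R)).toLinearMap ∈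
      degreeLowering σ R 1 :=
  fun _ _ hp => hp.pderiv

theorem commute_pderiv (i j : σ) :
    Commute (pderiv i : Derivation R (MvPolynomial σ R) (MvPolynomial σ R)).toLinearMap
      (pderiv j).toLinearMap := by
  obtain rfl | hij := eq_or_ne i j
  · exact Commute.refl _
  refine LinearMap.ext fun p => MvPolynomial.ext _ _ fun d => ?_
  simp [coeff_pderiv, hij, hij.symm, add_right_comm, mul_right_comm]

variable [Fintype σ]

/-- The directional derivative `⟨v, ∂⟩ = ∑ i, v i ∂ᵢ` on polynomials, as an element of the
endomorphism ring, in which the binomial theorem is applied. -/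
noncomputable def dirDerivEnd (v : σ → R) : Module.End R (MvPolynomial σ R) :=
  ∑ i, v i • (pderiv i).toLinearMap

variable (σ R) in
/-- The Laplacian `∑ i, ∂ᵢ²` on polynomials, as an element of the endomorphism ring. -/
noncomputable def laplacianEnd : Module.End R (MvPolynomial σ R) :=
  ∑ i, (pderiv i).toLinearMap ^ 2

theorem dirDerivEnd_mem_degreeLowering (v : σ → R) : dirDerivEnd v ∈ degreeLowering σ R 1 :=
  sum_mem fun i _ => Submodule.smul_mem _ (v i) (pderiv_mem_degreeLowering i)

theorem laplacianEnd_mem_degreeLowering : laplacianEnd σ R ∈ degreeLowering σ R 2 :=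
  sum_mem fun i _ => SetLike.pow_mem_graded 2 (pderiv_mem_degreeLowering i)

theorem commute_laplacianEnd_dirDerivEnd (v : σ → R) :
    Commute (laplacianEnd σ R) (dirDerivEnd v) :=
  Commute.sum_left _ _ _ fun i _ => Commute.sum_right _ _ _ fun j _ =>
    ((commute_pderiv i j).pow_left 2).smul_right (v j)

variable {n : ℕ} {p : MvPolynomial σ R}

theorem eval_dirDerivEnd_self (hp : p.IsHomogeneous n) (v : σ → R) :
    eval v (dirDerivEnd v p) = n * eval v p := by
  simpa [dirDerivEnd, smul_eval] using congrArg (eval v) hp.sum_X_mul_pderiv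

theorem eval_dirDerivEnd_pow (hp : p.IsHomogeneous n) (v x : σ → R) :
    eval x ((dirDerivEnd v ^ n) p) = n.factorial * eval v p := by
  induction n generalizing p with
  | zero =>
    rw [totalDegree_eq_zero_iff_eq_C.mp (Nat.le_zero.mp hp.totalDegree_le)]
    simp
  | succ n ih =>
    rw [pow_succ, Module.End.mul_apply, ih (dirDerivEnd_mem_degreeLowering v hp),
      eval_dirDerivEnd_self hp, Nat.factorial_succ]
    push_cast
    ring

end Operators

theorem eval_pow_apply_eq_sum_choose [CommRing R] [Fintype σ] {r s : ℕ}
    {p : MvPolynomial σ R} (hp : p.IsHomogeneous (r * s)) {L : Module.End R (MvPolynomial σ R)}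
    (hL : L ∈ degreeLowering σ R r) {v : σ → R} (hLv : Commute L (dirDerivEnd v)) (x : σ → R) :
    eval x ((L ^ s) p) = ∑ k ∈ Finset.range (s + 1),
      s.choose k * (r * (s - k)).factorial * eval v (((L - dirDerivEnd v ^ r) ^ k) p) := by
  set D := dirDerivEnd v
  set A := L - D ^ r
  have hD : D ^ r ∈ degreeLowering σ R r := by
    simpa using SetLike.pow_mem_graded r (dirDerivEnd_mem_degreeLowering v)
  have hA : A ∈ degreeLowering σ R r := sub_mem hL hD
  have hAD : Commute A (D ^ r) := (hLv.pow_right r).sub_left (Commute.refl _)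
  have binomial : L ^ s = ∑ k ∈ Finset.range (s + 1), s.choose k • (D ^ (r * (s - k)) * A ^ k) := by
    rw [← sub_add_cancel L (D ^ r), hAD.add_pow]
    refine Finset.sum_congr rfl fun k _ => ?_
    rw [(hAD.pow_pow k (s - k)).eq, ← pow_mul, nsmul_eq_mul, Nat.cast_comm]
  rw [binomial, LinearMap.sum_apply, map_sum]
  refine Finset.sum_congr rfl fun k _ => ?_
  have homogeneous_pow : ((A ^ k) p).IsHomogeneous (r * (s - k)) := by
    simpa [Nat.mul_sub, mul_comm k r] using SetLike.pow_mem_graded k hA hp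
  rw [LinearMap.smul_apply, Module.End.mul_apply, map_nsmul,
    eval_dirDerivEnd_pow homogeneous_pow, nsmul_eq_mul, mul_assoc]

theorem gamma_nat_add_half_eq_factorial (n : ℕ) :
    Gamma (n + 1 / 2) = (2 * n).factorial * √π / (2 ^ (2 * n) * n.factorial) := by
  have factorial_split : (2 * n).factorial = 2 ^ n * n.factorial * (2 * n - 1).doubleFactorial := by
    cases n with
    | zero => rfl
    | succ n =>
      rw [← Nat.doubleFactorial_two_mul]
      exact Nat.factorial_eq_mul_doubleFactorial (2 * n + 1)
  rw [Real.Gamma_nat_add_half, factorial_split]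
  push_cast
  field_simp
  ring

theorem choose_mul_factorial_eq_gamma {s k : ℕ} (hk : k ≤ s) :
    (s.choose k : ℝ) * (2 * (s - k)).factorial =
      2 ^ (2 * s) * s.factorial / √π *
        (Gamma ((s : ℝ) - k + 1 / 2) / (2 ^ (2 * k) * k.factorial)) := by
  obtain ⟨n, rfl⟩ := Nat.exists_eq_add_of_le hk
  rw [Nat.cast_choose ℝ hk, Nat.add_sub_cancel_left, Nat.cast_add, add_sub_cancel_left,
    gamma_nat_add_half_eq_factorial]
  field_simp
  ring

theorem lap_pow_at_zero_eq_general [Fintype σ] {s : ℕ} {p : MvPolynomial σ ℝ}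
    (hp : p.IsHomogeneous (2 * s)) (v x : σ → ℝ) :
    eval x ((laplacianEnd σ ℝ ^ s) p) =
      2 ^ (2 * s) * s.factorial / √π * ∑ k ∈ Finset.range (s + 1),
        Gamma ((s : ℝ) - k + 1 / 2) / (2 ^ (2 * k) * k.factorial) *
          eval v (((laplacianEnd σ ℝ - dirDerivEnd v ^ 2) ^ k) p) := by
  rw [eval_pow_apply_eq_sum_choose hp laplacianEnd_mem_degreeLowering
    (commute_laplacianEnd_dirDerivEnd v), Finset.mul_sum]
  refine Finset.sum_congr rfl fun k hk => ?_
  rw [choose_mul_factorial_eq_gamma (Finset.mem_range_succ_iff.mp hk), mul_assoc]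

section EuclideanSpace

variable {m : ℕ}

theorem isHomogeneous_of_polyEval_smul {n : ℕ} {p : MvPolynomial (Fin m) ℝ}
    (h : ∀ (t : ℝ) (x : EuclideanSpace ℝ (Fin m)), polyEval (t • x) p = t ^ n * polyEval x p) :
    p.IsHomogeneous n :=
  isHomogeneous_of_eval_smul fun t x => h t (WithLp.toLp 2 x)

theorem polyLap_eq_laplacianEnd : polyLap = ⇑(laplacianEnd (Fin m) ℝ) := by
  ext1 p
  simp [polyLap, laplacianEnd, pow_two]

theorem polyDir_eq_dirDerivEnd (ω : EuclideanSpace ℝ (Fin m)) : polyDir ω = ⇑(dirDerivEnd ω) := by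
  ext1 p
  simp [polyDir, dirDerivEnd]

theorem polyLap_iterate (s : ℕ) (p : MvPolynomial (Fin m) ℝ) :
    polyLap^[s] p = (laplacianEnd (Fin m) ℝ ^ s) p := by
  rw [Module.End.pow_apply, polyLap_eq_laplacianEnd]

theorem polyLap_sub_polyDir_polyDir_iterate (ω : EuclideanSpace ℝ (Fin m)) (k : ℕ)
    (p : MvPolynomial (Fin m) ℝ) :
    (fun q => polyLap q - polyDir ω (polyDir ω q))^[k] p =
      ((laplacianEnd (Fin m) ℝ - dirDerivEnd ω ^ 2) ^ k) p := by
  rw [Module.End.pow_apply, polyLap_eq_laplacianEnd, polyDir_eq_dirDerivEnd, pow_two]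
  rfl

end EuclideanSpace

/-- The identity relating `Δ^s R_{2s}(0)` to the action of `(Δ - ⟨ω,∂⟩²)^k` at a unit
vector `ω`, for a homogeneous polynomial of degree `2s`. -/
theorem lap_pow_at_zero_eq (m s : ℕ) (hm : 2 ≤ m) (R : MvPolynomial (Fin m) ℝ)
    (hhom : ∀ (t : ℝ) (x : EuclideanSpace ℝ (Fin m)),
      polyEval (t • x) R = t ^ (2 * s) * polyEval x R)
    (ω : EuclideanSpace ℝ (Fin m)) (hω : ‖ω‖ = 1) :
    polyEval 0 (polyLap^[s] R)
      = (2 ^ (2 * s) * (Nat.factorial s) / Real.sqrt π) *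
          ∑ k ∈ Finset.range (s + 1),
            (Gamma ((s : ℝ) - k + 1 / 2) / (2 ^ (2 * k) * (Nat.factorial k)))
            * polyEval ω ((fun Q => polyLap Q - polyDir ω (polyDir ω Q))^[k] R) := by
  simp only [polyLap_iterate, polyLap_sub_polyDir_polyDir_iterate]
  exact lap_pow_at_zero_eq_general (isHomogeneous_of_polyEval_smul hhom) ω _
end

section
/- Let m ≥ 2 be an even integer and k ≥ 0 an integer. Then ∏_{j=1}^{(m−2)/2} [−2k(m−2+2k) − (m−2j−1)(2j−1)] = (−1)^{m/2 − 1} · 2^{m−2} · Γ((m−1)/2 + k)² / Γ(k + 1/2)². (For m = 2 the product is empty and equals 1.) -/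
open Real

/-!
Put `a = s + 1/2` and `m = 2n + 2`. Each factor splits as
`-(2s + 2j - 1)(2s + m - 2j - 1) = -4 (a + (j - 1)) (a + (n - j))`.
As `j` runs over `1, …, n`, the numbers `j - 1` and `n - j` both run over `0, …, n - 1`, so the
product is `(-4)ⁿ` times the square of the rising factorial `(a)ₙ = Γ(a + n) / Γ(a)`.
-/

theorem ascPochhammer_eval_eq_prod_range {R : Type*} [CommSemiring R] (n : ℕ) (r : R) :
    (ascPochhammer R n).eval r = ∏ i ∈ Finset.range n, (r + i) := by
  induction n with
  | zero => simp
  | succ n ih => rw [ascPochhammer_succ_eval, ih, Finset.prod_range_succ]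

theorem ascPochhammer_eval_eq_prod_Icc_add_sub_one {R : Type*} [CommRing R] (n : ℕ) (r : R) :
    (ascPochhammer R n).eval r = ∏ j ∈ Finset.Icc 1 n, (r + (j - 1)) := by
  rw [ascPochhammer_eval_eq_prod_range, Finset.range_eq_Ico, ← Finset.Ico_add_one_right_eq_Icc,
    ← Finset.prod_Ico_add' _ 0 n 1]
  simp only [Nat.cast_add_one, add_sub_cancel_right]

theorem ascPochhammer_eval_eq_prod_Icc_add_sub {R : Type*} [CommRing R] (n : ℕ) (r : R) :
    (ascPochhammer R n).eval r = ∏ j ∈ Finset.Icc 1 n, (r + (n - j)) := by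
  rw [ascPochhammer_eval_eq_prod_range, Finset.range_eq_Ico, ← Finset.Ico_add_one_right_eq_Icc]
  have reflect := Finset.prod_Ico_reflect (fun i : ℕ ↦ r + i) 1 (le_refl (n + 1))
  rw [Nat.sub_self, Nat.add_sub_cancel] at reflect
  rw [← reflect]
  refine Finset.prod_congr rfl fun j hj ↦ ?_
  rw [Nat.cast_sub (Nat.lt_succ_iff.mp (Finset.mem_Ico.mp hj).2)]

theorem helgason_factor_eq {K : Type*} [Field K] [NeZero (2 : K)] (n s j : K) :
    -2 * s * (2 * n + 2 * s) - (2 * n + 1 - 2 * j) * (2 * j - 1) =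
      -4 * ((s + 1 / 2 + (j - 1)) * (s + 1 / 2 + (n - j))) := by
  field_simp
  ring

theorem helgason_prod_eq_ascPochhammer {K : Type*} [Field K] [NeZero (2 : K)] (n : ℕ) (s : K) :
    ∏ j ∈ Finset.Icc 1 n, (-2 * s * (2 * n + 2 * s) - (2 * n + 1 - 2 * j) * (2 * j - 1)) =
      (-4) ^ n * (ascPochhammer K n).eval (s + 1 / 2) ^ 2 := by
  simp only [helgason_factor_eq, Finset.prod_mul_distrib, Finset.prod_const, Nat.card_Icc,
    Nat.add_sub_cancel, ← ascPochhammer_eval_eq_prod_Icc_add_sub_one,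
    ← ascPochhammer_eval_eq_prod_Icc_add_sub, sq]

theorem ne_neg_natCast_of_re_pos {z : ℂ} (hz : 0 < z.re) (j : ℕ) : z ≠ -j := by
  rintro rfl
  rw [Complex.neg_re, Complex.natCast_re] at hz
  linarith [j.cast_nonneg (α := ℝ)]

theorem helgason_polynomial_eval_general (m : ℕ) (hm : 2 ≤ m) (hmeven : Even m) (s : ℂ)
    (hs : ∀ j : ℕ, s + 1 / 2 ≠ -j) :
    (∏ j ∈ Finset.Icc 1 ((m - 2) / 2),
        (-2 * s * ((m : ℂ) - 2 + 2 * s) - ((m : ℂ) - 2 * j - 1) * (2 * (j : ℂ) - 1)))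
      = (-1 : ℂ) ^ (m / 2 - 1) * 2 ^ (m - 2) *
          Complex.Gamma (((m : ℂ) - 1) / 2 + s) ^ 2 / Complex.Gamma (s + 1 / 2) ^ 2 := by
  obtain ⟨n, rfl⟩ : ∃ n, m = 2 * n + 2 := by
    obtain ⟨r, rfl⟩ := hmeven
    exact ⟨r - 1, by lia⟩
  have half_degree : 2 * n / 2 = n := by lia
  have sign_exponent : (2 * n + 2) / 2 - 1 = n := by lia
  have cast_sub_two : ((2 * n + 2 : ℕ) : ℂ) - 2 = 2 * n := by push_cast; ring
  have cast_factor (j : ℂ) : ((2 * n + 2 : ℕ) : ℂ) - 2 * j - 1 = 2 * n + 1 - 2 * j := by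
    push_cast; ring
  have gamma_arg : (((2 * n + 2 : ℕ) : ℂ) - 1) / 2 + s = s + 1 / 2 + n := by push_cast; ring
  have neg_four_pow : (-4 : ℂ) ^ n = (-1) ^ n * 2 ^ (2 * n) := by
    rw [pow_mul, ← mul_pow]; norm_num
  simp only [Nat.add_sub_cancel, half_degree, sign_exponent, cast_sub_two, cast_factor, gamma_arg]
  rw [helgason_prod_eq_ascPochhammer, ← Complex.Gamma_add_nat_div_Gamma_eq _ hs, neg_four_pow,
    div_pow, mul_div_assoc]

/-- Evaluation of the Helgason polynomial `P_{m-2}` at the Laplace–Beltrami eigenvalue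
`-2k(m-2+2k)` of spherical harmonics of degree `2k`, in closed form. -/
theorem helgason_polynomial_eval (m k : ℕ) (hm : 2 ≤ m) (hmeven : Even m) :
    (∏ j ∈ Finset.Icc 1 ((m - 2) / 2),
        (-2 * (k : ℝ) * ((m : ℝ) - 2 + 2 * k) - ((m : ℝ) - 2 * j - 1) * (2 * (j : ℝ) - 1)))
      = (-1 : ℝ) ^ (m / 2 - 1) * 2 ^ (m - 2) *
          Gamma (((m : ℝ) - 1) / 2 + k) ^ 2 / Gamma ((k : ℝ) + 1 / 2) ^ 2 := by
  apply Complex.ofReal_injective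
  push_cast [← Complex.Gamma_ofReal]
  exact helgason_polynomial_eval_general m hm hmeven k
    (ne_neg_natCast_of_re_pos (by norm_num; positivity))
end

section
/- Let m ≥ 3 be an integer and let k ≥ j ≥ 0 be integers. For u > 0 define J(u) = ∫_0^{√u} (1 − q²)^{k−j} · q^{2j+m−2} · (u − q²)^{(m−4)/2} dq. Then the (m−2)-nd derivative of J at u = 1 satisfies J^{(m−2)}(1) = (Γ((m−2)/2) / 2) · (Γ(j + (m−1)/2) / Γ(k + 1/2)) · ∏_{i=0}^{k−j−1} ((2−m)/2 + i), where the product is empty (equal to 1) when j = k. -/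
open Real

/-!
Substituting `x = q²` turns `J` into half of `∫_0^u (1-x)^n x^{a-1} (u-x)^{c-1} dx`. By the beta
integral the monomial `x^i` contributes `Γ(c) Γ(a+i) · u^{a+i+c-1} / Γ(a+i+c)`, and differentiating
`u^{p-1} / Γ(p)` just lowers `p` by one. So after `M` derivatives at `u = 1` the monomial `x^i`
has become `Γ(c) f(a+i)` with `f(x) = Γ(x) / Γ(x+c-M)`, hence `(1-x)^n = (-1)^n (x-1)^n` has become
`(-1)^n Γ(c)` times the `n`-th forward difference of `f` at `a`, which is computed by the recurrence
of `Γ`. The original integral has `a = j + (m-1)/2`, `c = (m-2)/2`, `n = k - j` and `M = m - 2`.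
-/

theorem inv_Gamma_eq_self_mul_inv_Gamma_add_one (x : ℝ) :
    (Gamma x)⁻¹ = x * (Gamma (x + 1))⁻¹ := by
  rcases eq_or_ne x 0 with rfl | hx
  · simp only [Gamma_zero, inv_zero, zero_mul]
  · rw [Gamma_add_one hx, mul_inv, mul_inv_cancel_left₀ hx]

theorem fwdDiff_iter_Gamma_div_Gamma_add (δ : ℝ) (n : ℕ) {x : ℝ} (hx : ∀ k : ℕ, x ≠ -k) :
    (fwdDiff 1)^[n] (fun y ↦ Gamma y / Gamma (y + δ)) x =
      (-1) ^ n * (∏ i ∈ Finset.range n, (δ + i)) * (Gamma x / Gamma (x + δ + n)) := by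
  induction n generalizing x with
  | zero => simp
  | succ n ih =>
    have hx_add_one (k : ℕ) : x + 1 ≠ -k := fun h ↦ hx (k + 1) (by push_cast; linarith)
    have hx_zero : x ≠ 0 := by simpa using hx 0
    rw [Function.iterate_succ_apply', fwdDiff, ih hx, ih hx_add_one, Finset.prod_range_succ,
      Gamma_add_one hx_zero, div_eq_mul_inv (Gamma x) (Gamma (x + δ + n)),
      inv_Gamma_eq_self_mul_inv_Gamma_add_one (x + δ + n)]
    push_cast
    ring_nf

theorem sum_neg_one_pow_mul_choose_mul_eq_fwdDiff_iter {A R : Type*} [AddCommMonoid A]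
    [CommRing R] (h : A) (f : A → R) (n : ℕ) (x : A) :
    ∑ i ∈ Finset.range (n + 1), (-1) ^ i * n.choose i * f (x + i • h) =
      (-1) ^ n * (fwdDiff h)^[n] f x := by
  rw [fwdDiff_iter_eq_sum_shift, Finset.mul_sum]
  refine Finset.sum_congr rfl fun i hi ↦ ?_
  obtain ⟨d, rfl⟩ := Nat.exists_eq_add_of_le (Finset.mem_range_succ_iff.1 hi)
  have neg_one_pow_mul_self : (-1 : R) ^ d * (-1) ^ d = 1 := by
    rw [← mul_pow, neg_one_mul, neg_neg, one_pow]
  simp only [add_tsub_cancel_left, zsmul_eq_mul, pow_add]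
  push_cast
  linear_combination -((-1) ^ i * (i + d).choose i * f (x + i • h)) * neg_one_pow_mul_self

theorem sum_neg_one_pow_mul_choose_mul_Gamma_div_Gamma_add (δ : ℝ) (n : ℕ) {x : ℝ}
    (hx : ∀ k : ℕ, x ≠ -k) :
    ∑ i ∈ Finset.range (n + 1), (-1) ^ i * n.choose i * (Gamma (x + i) / Gamma (x + i + δ)) =
      (∏ i ∈ Finset.range n, (δ + i)) * (Gamma x / Gamma (x + δ + n)) := by
  have sum_eq_fwdDiff := sum_neg_one_pow_mul_choose_mul_eq_fwdDiff_iter 1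
    (fun y ↦ Gamma y / Gamma (y + δ)) n x
  simp only [nsmul_one] at sum_eq_fwdDiff
  rw [sum_eq_fwdDiff, fwdDiff_iter_Gamma_div_Gamma_add δ n hx, ← mul_assoc, ← mul_assoc,
    ← mul_pow, neg_one_mul, neg_neg, one_pow, one_mul]

theorem iterate_deriv_rpow_div_Gamma (M : ℕ) (p : ℝ) :
    deriv^[M] (fun u ↦ u ^ (p - 1) / Gamma p) = fun u ↦ u ^ (p - M - 1) / Gamma (p - M) := by
  induction M generalizing p with
  | zero => simp
  | succ M ih =>
    have deriv_step : deriv (fun u ↦ u ^ (p - 1) / Gamma p) =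
        fun u ↦ u ^ (p - 1 - 1) / Gamma (p - 1) := by
      ext u
      rw [deriv_div_const, Real.deriv_rpow_const, div_eq_mul_inv _ (Gamma (p - 1)),
        inv_Gamma_eq_self_mul_inv_Gamma_add_one (p - 1), sub_add_cancel]
      ring
    rw [Function.iterate_succ_apply, deriv_step, ih]
    push_cast
    rw [add_comm (M : ℝ) 1, sub_add_eq_sub_sub]

theorem integral_rpow_mul_sub_rpow {a c u : ℝ} (ha : 0 < a) (hc : 0 < c) (hu : 0 < u) :
    ∫ x in (0 : ℝ)..u, x ^ (a - 1) * (u - x) ^ (c - 1) =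
      Gamma a * Gamma c * (u ^ (a + c - 1) / Gamma (a + c)) := by
  have complex_integral : ((∫ x in (0 : ℝ)..u, x ^ (a - 1) * (u - x) ^ (c - 1) : ℝ) : ℂ) =
      ∫ x in (0 : ℝ)..u, (x : ℂ) ^ ((a : ℂ) - 1) * ((u : ℂ) - x) ^ ((c : ℂ) - 1) := by
    rw [← intervalIntegral.integral_ofReal]
    refine intervalIntegral.integral_congr fun x hx ↦ ?_
    rw [Set.uIcc_of_le hu.le] at hx
    push_cast [Complex.ofReal_cpow hx.1, Complex.ofReal_cpow (sub_nonneg.2 hx.2)]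
    rfl
  apply Complex.ofReal_injective
  rw [complex_integral, Complex.betaIntegral_scaled _ _ hu,
    Complex.betaIntegral_eq_Gamma_mul_div _ _ (by simpa) (by simpa)]
  push_cast [Complex.ofReal_cpow hu.le, ← Complex.Gamma_ofReal]
  ring

theorem integral_comp_sq_mul_self (g : ℝ → ℝ) {u : ℝ} (hu : 0 ≤ u) :
    ∫ q in (0 : ℝ)..√u, g (q ^ 2) * q = (∫ x in (0 : ℝ)..u, g x) / 2 := by
  have substitution : ∫ q in (0 : ℝ)..√u, g (q ^ 2) * (2 * q) = ∫ x in (0 : ℝ)..u, g x := by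
    have h := intervalIntegral.integral_comp_mul_deriv_of_deriv_nonneg (a := 0) (b := √u)
      (f := fun q ↦ q ^ 2) (f' := fun q ↦ 2 * q) (g := g) (by fun_prop)
      (fun q _ ↦ by simpa using hasDerivAt_pow 2 q)
      (fun q hq ↦ by
        rw [min_eq_left (sqrt_nonneg u)] at hq
        exact mul_nonneg zero_le_two hq.1.le)
    simpa [sq_sqrt hu] using h
  rw [← substitution, ← intervalIntegral.integral_div]
  congr with q
  ring

theorem integral_one_sub_pow_mul_rpow_mul_sub_rpow {a c u : ℝ} (ha : 0 < a) (hc : 0 < c)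
    (hu : 0 < u) (n : ℕ) :
    ∫ x in (0 : ℝ)..u, (1 - x) ^ n * (x ^ (a - 1) * (u - x) ^ (c - 1)) =
      ∑ i ∈ Finset.range (n + 1), (-1) ^ i * n.choose i * Gamma (a + i) * Gamma c *
        (u ^ (a + i + c - 1) / Gamma (a + i + c)) := by
  have hai (i : ℕ) : 0 < a + i := by positivity
  have monomial_integrable (i : ℕ) : IntervalIntegrable
      (fun x ↦ x ^ (a + i - 1) * (u - x) ^ (c - 1)) MeasureTheory.volume 0 u := by
    -- A divergent integral would have the junk value `0`, while the beta integral is positive.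
    apply intervalIntegral.intervalIntegrable_of_integral_ne_zero
    rw [integral_rpow_mul_sub_rpow (hai i) hc hu]
    have := Gamma_pos_of_pos (hai i)
    have := Gamma_pos_of_pos hc
    have := Gamma_pos_of_pos (add_pos (hai i) hc)
    positivity
  have expansion : ∀ᵐ x, x ∈ Set.uIoc 0 u → (1 - x) ^ n * (x ^ (a - 1) * (u - x) ^ (c - 1)) =
      ∑ i ∈ Finset.range (n + 1),
        (-1) ^ i * n.choose i * (x ^ (a + i - 1) * (u - x) ^ (c - 1)) := by
    refine .of_forall fun x hx ↦ ?_
    rw [Set.uIoc_of_le hu.le] at hx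
    rw [sub_eq_neg_add, add_pow, Finset.sum_mul]
    refine Finset.sum_congr rfl fun i _ ↦ ?_
    rw [add_sub_right_comm, rpow_add_natCast hx.1.ne', neg_pow]
    ring
  rw [intervalIntegral.integral_congr_ae expansion, intervalIntegral.integral_finsetSum
    fun i _ ↦ (monomial_integrable i).const_mul _]
  refine Finset.sum_congr rfl fun i _ ↦ ?_
  rw [intervalIntegral.integral_const_mul, integral_rpow_mul_sub_rpow (hai i) hc hu]
  ring

theorem integral_one_sub_sq_pow_mul_rpow_mul_sub_sq_rpow {a c u : ℝ} (ha : 0 < a) (hc : 0 < c)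
    (hu : 0 < u) (n : ℕ) :
    ∫ q in (0 : ℝ)..√u, (1 - q ^ 2) ^ n * q ^ (2 * a - 1) * (u - q ^ 2) ^ (c - 1) =
      ∑ i ∈ Finset.range (n + 1), (-1) ^ i * n.choose i * Gamma (a + i) * (Gamma c / 2) *
        (u ^ (a + i + c - 1) / Gamma (a + i + c)) := by
  have integrand_eq : ∀ᵐ q, q ∈ Set.uIoc 0 √u →
      (1 - q ^ 2) ^ n * q ^ (2 * a - 1) * (u - q ^ 2) ^ (c - 1) =
        (1 - q ^ 2) ^ n * ((q ^ 2) ^ (a - 1) * (u - q ^ 2) ^ (c - 1)) * q := by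
    refine .of_forall fun q hq ↦ ?_
    rw [Set.uIoc_of_le (sqrt_nonneg u)] at hq
    have rpow_eq : q ^ (2 * a - 1) = (q ^ 2) ^ (a - 1) * q := by
      rw [← rpow_natCast_mul hq.1.le, ← rpow_add_one hq.1.ne']
      push_cast
      ring_nf
    rw [rpow_eq]
    ring
  rw [intervalIntegral.integral_congr_ae integrand_eq,
    integral_comp_sq_mul_self (fun x ↦ (1 - x) ^ n * (x ^ (a - 1) * (u - x) ^ (c - 1))) hu.le,
    integral_one_sub_pow_mul_rpow_mul_sub_rpow ha hc hu, Finset.sum_div]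
  refine Finset.sum_congr rfl fun i _ ↦ ?_
  ring

theorem iterate_deriv_sum_const_mul_rpow_div_Gamma {ι : Type*} (s : Finset ι) (b p : ι → ℝ)
    (M : ℕ) {u : ℝ} (hu : u ≠ 0) :
    deriv^[M] (fun v ↦ ∑ i ∈ s, b i * (v ^ (p i - 1) / Gamma (p i))) u =
      ∑ i ∈ s, b i * (u ^ (p i - M - 1) / Gamma (p i - M)) := by
  rw [← iteratedDeriv_eq_iterate, iteratedDeriv_fun_sum fun i _ ↦
    contDiffAt_const.mul ((contDiffAt_rpow_const_of_ne hu).div_const _)]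
  refine Finset.sum_congr rfl fun i _ ↦ ?_
  rw [iteratedDeriv_const_mul_field, iteratedDeriv_eq_iterate, iterate_deriv_rpow_div_Gamma]

/-- When `a + (c - M) + n` is a pole of `Γ`, the quotient by `Γ = 0` is `0`, in agreement with the
entire function `1 / Γ`. -/
theorem deriv_J_eval_general {a c : ℝ} (ha : 0 < a) (hc : 0 < c) (n M : ℕ) :
    deriv^[M]
        (fun u : ℝ ↦ ∫ q in (0 : ℝ)..√u,
          (1 - q ^ 2) ^ n * q ^ (2 * a - 1) * (u - q ^ 2) ^ (c - 1)) 1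
      = (Gamma c / 2) * (Gamma a / Gamma (a + (c - M) + n)) *
          ∏ i ∈ Finset.range n, (c - M + i) := by
  have J_eq_sum : (fun u : ℝ ↦ ∫ q in (0 : ℝ)..√u,
      (1 - q ^ 2) ^ n * q ^ (2 * a - 1) * (u - q ^ 2) ^ (c - 1)) =ᶠ[nhds 1] fun u ↦
      ∑ i ∈ Finset.range (n + 1), (-1) ^ i * n.choose i * Gamma (a + i) * (Gamma c / 2) *
        (u ^ (a + i + c - 1) / Gamma (a + i + c)) := by
    filter_upwards [lt_mem_nhds one_pos] with u hu
    exact integral_one_sub_sq_pow_mul_rpow_mul_sub_sq_rpow ha hc hu n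
  have a_ne_neg (k : ℕ) : a ≠ -k := by
    have : 0 ≤ (k : ℝ) := k.cast_nonneg
    linarith
  rw [← iteratedDeriv_eq_iterate, J_eq_sum.iteratedDeriv_eq, iteratedDeriv_eq_iterate,
    iterate_deriv_sum_const_mul_rpow_div_Gamma _ _ _ _ one_ne_zero, mul_assoc,
    mul_comm (Gamma a / _), ← sum_neg_one_pow_mul_choose_mul_Gamma_div_Gamma_add _ n a_ne_neg,
    Finset.mul_sum]
  refine Finset.sum_congr rfl fun i _ ↦ ?_
  rw [one_rpow, add_sub_assoc (a + i)]
  ring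

/-- The `(m-2)`-nd derivative at `u = 1` of
`J(u) = ∫_0^{√u} (1-q²)^{k-j} q^{2j+m-2} (u-q²)^{(m-4)/2} dq`, in closed form. -/
theorem deriv_J_eval (m k j : ℕ) (hm : 3 ≤ m) (hjk : j ≤ k) :
    deriv^[m - 2]
        (fun u : ℝ => ∫ q in (0 : ℝ)..Real.sqrt u,
          (1 - q ^ 2) ^ (k - j) * q ^ (2 * j + m - 2) * (u - q ^ 2) ^ (((m : ℝ) - 4) / 2)) 1
      = (Gamma (((m : ℝ) - 2) / 2) / 2) *
          (Gamma ((j : ℝ) + ((m : ℝ) - 1) / 2) / Gamma ((k : ℝ) + 1 / 2)) *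
          ∏ i ∈ Finset.range (k - j), ((2 - (m : ℝ)) / 2 + i) := by
  have three_le_m : (3 : ℝ) ≤ m := by exact_mod_cast hm
  have ha : 0 < (j : ℝ) + ((m : ℝ) - 1) / 2 :=
    add_pos_of_nonneg_of_pos j.cast_nonneg (by linarith)
  have hc : 0 < ((m : ℝ) - 2) / 2 := by linarith
  have q_exponent : ((2 * j + m - 2 : ℕ) : ℝ) = 2 * (j + ((m : ℝ) - 1) / 2) - 1 := by
    rw [Nat.cast_sub (by omega)]
    push_cast
    ring
  have shift : (2 - (m : ℝ)) / 2 = ((m : ℝ) - 2) / 2 - (m - 2 : ℕ) := by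
    rw [Nat.cast_sub (by omega)]
    push_cast
    ring
  have Gamma_argument : (k : ℝ) + 1 / 2 =
      j + ((m : ℝ) - 1) / 2 + (2 - (m : ℝ)) / 2 + (k - j : ℕ) := by
    rw [Nat.cast_sub hjk]
    ring
  simp_rw [← rpow_natCast _ (2 * j + m - 2), q_exponent]
  rw [Gamma_argument, shift, show ((m : ℝ) - 4) / 2 = ((m : ℝ) - 2) / 2 - 1 by ring]
  exact deriv_J_eval_general ha hc (k - j) (m - 2)
end

section
/- Let k ≥ 0 be an integer and let a ∈ ℝ be such that a + 1/2 is not an integer and a is not a nonpositive integer. Then Σ_{j=0}^{k} ((−1)^j / (2^{2j} · j! · (2k−2j)!)) · Γ(k − j + 1/2 − a) = (−1)^k · (Γ(k + a) · Γ(1/2 − a)) / ((2k)! · Γ(a)). -/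
open Real

/-!
Writing `(x)ₙ` for the rising factorial, one has `Γ (x + n) = (x)ₙ Γ x`, and the duplication formula
`(2n)! = 4ⁿ n! (1/2)ₙ` turns the factorials of even numbers into rising factorials at `1/2`. With
`m = k - j`, multiplying the sum by `(-1)ᵏ (2k)! / Γ (1/2 - a)` therefore gives
`∑ₘ (k choose m) (-1)ᵐ (1/2 - a)ₘ (1/2 + m)ₖ₋ₘ`. By the Chu–Vandermonde identity this is `(a)ₖ`,
that is, `Γ (k + a) / Γ a`.
-/

open Finset Polynomial
open scoped Nat

lemma ascPochhammer_add_eval {R : Type*} [CommSemiring R] (m n : ℕ) (x : R) :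
    (ascPochhammer R (m + n)).eval x =
      (ascPochhammer R m).eval x * (ascPochhammer R n).eval (x + m) := by
  rw [← ascPochhammer_mul, eval_mul, eval_comp, eval_add, eval_X, eval_natCast]

lemma descPochhammer_eval_add {R : Type*} [CommRing R] (k : ℕ) (x y : R) :
    (descPochhammer R k).eval (x + y) = ∑ ij ∈ antidiagonal k, (k.choose ij.1 : R) *
      ((descPochhammer R ij.1).eval x * (descPochhammer R ij.2).eval y) := by
  have smeval_eq_eval (n : ℕ) (z : R) :
      (descPochhammer ℤ n).smeval z = (descPochhammer R n).eval z := by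
    rw [← descPochhammer_map (Int.castRingHom R), eval_map, ← eval₂_smulOneHom_eq_smeval]
    congr 1
    exact RingHom.ext_int _ _
  simpa only [smeval_eq_eval] using Ring.descPochhammer_smeval_add k (Commute.all x y)

/-- The Gauss summation `₂F₁(-k, b; c; 1) = (c - b)ₖ / (c)ₖ` multiplied by `(c)ₖ`, which makes
it valid in every commutative ring. -/
lemma sum_choose_mul_ascPochhammer_eval {R : Type*} [CommRing R] (k : ℕ) (b c : R) :
    ∑ ij ∈ antidiagonal k, (k.choose ij.1 : R) *
        ((-1) ^ ij.1 * (ascPochhammer R ij.1).eval b * (ascPochhammer R ij.2).eval (c + ij.1)) =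
      (ascPochhammer R k).eval (c - b) := by
  have vandermonde := descPochhammer_eval_add k (-b) (c + k - 1)
  rw [descPochhammer_eval_eq_ascPochhammer, show -b + (c + k - 1) - k + 1 = c - b by ring]
    at vandermonde
  rw [vandermonde]
  refine sum_congr rfl fun ⟨m, n⟩ hmn => ?_
  obtain rfl : m + n = k := mem_antidiagonal.mp hmn
  have desc_neg : (descPochhammer R m).eval (-b) = (-1) ^ m * (ascPochhammer R m).eval b := by
    have reflection := ascPochhammer_eval_neg_eq_descPochhammer R (-b) m
    rw [neg_neg] at reflection
    rw [reflection, ← mul_assoc, ← mul_pow, neg_one_mul, neg_neg, one_pow, one_mul]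
  have desc_shift : (descPochhammer R n).eval (c + (m + n : ℕ) - 1) =
      (ascPochhammer R n).eval (c + m) := by
    rw [descPochhammer_eval_eq_ascPochhammer]
    congr 1
    push_cast
    ring
  rw [desc_neg, desc_shift]

lemma cast_factorial_two_mul {K : Type*} [Semifield K] [NeZero (2 : K)] (n : ℕ) :
    ((2 * n)! : K) = 2 ^ (2 * n) * n ! * (ascPochhammer K n).eval (1 / 2) := by
  induction n with
  | zero => simp
  | succ n ih =>
    rw [ascPochhammer_succ_eval, mul_add_one, Nat.factorial_succ, Nat.factorial_succ,
      Nat.factorial_succ]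
    push_cast
    rw [ih]
    field_simp
    ring

lemma cast_factorial_two_mul_add {K : Type*} [Semifield K] [NeZero (2 : K)] (m n : ℕ) :
    ((2 * (m + n))! : K) = 2 ^ (2 * n) * n ! * (2 * m)! *
      ((m + n).choose m * (ascPochhammer K n).eval (1 / 2 + (m : K))) := by
  have choose_mul : ((m + n)! : K) = (m + n).choose m * m ! * n ! := by
    rw [Nat.choose_symm_add, ← Nat.add_choose_mul_factorial_mul_factorial m n, Nat.cast_mul,
      Nat.cast_mul]
  rw [cast_factorial_two_mul, cast_factorial_two_mul, ascPochhammer_add_eval, choose_mul]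
  ring

lemma neg_one_pow_div_factorial_two_mul {K : Type*} [Field K] [CharZero K] (m n : ℕ) :
    (-1 : K) ^ n / (2 ^ (2 * n) * n ! * (2 * m)!) = (-1) ^ (m + n) / (2 * (m + n))! *
      ((m + n).choose m * ((-1) ^ m * (ascPochhammer K n).eval (1 / 2 + (m : K)))) := by
  have denominator_ne_zero : (2 ^ (2 * n) * n ! * (2 * m)! : K) ≠ 0 := by
    simp [Nat.factorial_ne_zero]
  have factorial_ne_zero : ((2 * (m + n))! : K) ≠ 0 := by simp [Nat.factorial_ne_zero]
  have sign : (-1 : K) ^ (m + n) * (-1) ^ m = (-1) ^ n := by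
    rw [pow_add, mul_right_comm, ← mul_pow, neg_one_mul, neg_neg, one_pow, one_mul]
  rw [div_mul_eq_mul_div, div_eq_div_iff denominator_ne_zero factorial_ne_zero,
    cast_factorial_two_mul_add, ← sign]
  ring

lemma Gamma_add_natCast (n : ℕ) {z : ℂ} (hz : ∀ m : ℕ, z ≠ -m) :
    Complex.Gamma (z + n) = (ascPochhammer ℂ n).eval z * Complex.Gamma z :=
  (div_eq_iff (Complex.Gamma_ne_zero hz)).mp (Complex.Gamma_add_nat_div_Gamma_eq z hz)

theorem gamma_binomial_sum_general (k : ℕ) (a : ℂ) (ha : ∀ n : ℕ, a ≠ -n)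
    (hb : ∀ n : ℕ, 1 / 2 - a ≠ -n) :
    ∑ j ∈ range (k + 1),
        (-1 : ℂ) ^ j / (2 ^ (2 * j) * j ! * (2 * k - 2 * j)!) *
          Complex.Gamma (k - j + 1 / 2 - a) =
      (-1 : ℂ) ^ k * (Complex.Gamma (k + a) * Complex.Gamma (1 / 2 - a)) /
        ((2 * k)! * Complex.Gamma a) := by
  calc
    _ = ∑ ij ∈ antidiagonal k, (-1) ^ ij.2 / (2 ^ (2 * ij.2) * ij.2 ! * (2 * ij.1)!) *
          Complex.Gamma (1 / 2 - a + ij.1) := by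
      rw [← Nat.sum_antidiagonal_swap, Nat.sum_antidiagonal_eq_sum_range_succ_mk]
      refine sum_congr rfl fun j hj => ?_
      have hjk : j ≤ k := mem_range_succ_iff.mp hj
      rw [Prod.fst_swap, Prod.snd_swap, Nat.mul_sub, Nat.cast_sub hjk]
      ring_nf
    _ = ∑ ij ∈ antidiagonal k, (-1) ^ k / (2 * k)! * Complex.Gamma (1 / 2 - a) *
          (k.choose ij.1 * ((-1) ^ ij.1 * (ascPochhammer ℂ ij.1).eval (1 / 2 - a) *
          (ascPochhammer ℂ ij.2).eval (1 / 2 + (ij.1 : ℂ)))) := by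
      refine sum_congr rfl fun ⟨m, n⟩ hmn => ?_
      obtain rfl : m + n = k := mem_antidiagonal.mp hmn
      rw [neg_one_pow_div_factorial_two_mul, Gamma_add_natCast m hb]
      ring
    _ = (-1) ^ k / (2 * k)! * Complex.Gamma (1 / 2 - a) * (ascPochhammer ℂ k).eval a := by
      rw [← mul_sum, sum_choose_mul_ascPochhammer_eval, sub_sub_cancel]
    _ = _ := by
      rw [add_comm (k : ℂ) a, Gamma_add_natCast k ha]
      field_simp [Complex.Gamma_ne_zero ha]

/-- The Gamma–binomial summation identity used in the proof of the inversion formula for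
the spherical Radon transform. -/
theorem gamma_binomial_sum (k : ℕ) (a : ℝ) (ha1 : ∀ n : ℤ, a + 1 / 2 ≠ n)
    (ha2 : ∀ n : ℕ, a ≠ -(n : ℝ)) :
    ∑ j ∈ Finset.range (k + 1),
        ((-1 : ℝ) ^ j / (2 ^ (2 * j) * (Nat.factorial j) * (Nat.factorial (2 * k - 2 * j))))
          * Gamma ((k : ℝ) - j + 1 / 2 - a)
      = (-1 : ℝ) ^ k * (Gamma ((k : ℝ) + a) * Gamma (1 / 2 - a)) /
          ((Nat.factorial (2 * k)) * Gamma a) := by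
  have hb (n : ℕ) : (1 / 2 - a : ℂ) ≠ -n := fun h =>
    ha1 (n + 1) (Complex.ofReal_injective (by push_cast; linear_combination -h))
  apply Complex.ofReal_injective
  push_cast [← Complex.Gamma_ofReal]
  exact gamma_binomial_sum_general k a (mod_cast ha2) hb
end
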